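/- arXiv:2112.05064 — 2 statements merged into one kernel-verified Lean document; each statement's English description precedes it below -/
import Mathlib

section
/- For all integers m ≥ 0 and n ≥ 0, Σ_{i=0}^{m} (−1)^i · ⟦m+n+1, i+n+1⟧_{n+1} · S_i(n) = m! · C(n+m, m+1), where S_i(n) = 1^i + 2^i + ⋯ + n^i is the power sum and C(a,b) is a binomial coefficient. -/
/-- The `r`-Stirling numbers of the first kind `⟦n,k⟧_r`: `⟦r,r⟧_r = 1`,
`⟦n,k⟧_r = 0` if `n < r` or `k < r`, and
`⟦n,k⟧_r = (n-1)·⟦n-1,k⟧_r + ⟦n-1,k-1⟧_r` for `n > r`. -/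
def rStirling1 (r : ℕ) : ℕ → ℕ → ℕ
  | 0, k => if r = 0 ∧ k = 0 then 1 else 0
  | (n+1), k =>
    if n + 1 < r ∨ k < r then 0
    else if n + 1 = r then (if k = r then 1 else 0)
    else if k = 0 then 0
    else n * rStirling1 r n k + rStirling1 r n (k - 1)

/-- The (unsigned) Stirling numbers of the first kind. -/
def stirling1 : ℕ → ℕ → ℕ := rStirling1 0
/-- The power sum `S_k(n) = 1^k + 2^k + ⋯ + n^k`. -/
def powerSum (k n : ℕ) : ℕ := ∑ i ∈ Finset.Icc 1 n, i ^ k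

/-! The polynomial `∑ i, ⟦m + r, i + r⟧_r x ^ i` is the rising factorial of `x + r` of length `m`.
Expanding the power sums and exchanging the order of summation evaluates it at `r = n + 1` and
`x = -1, …, -n`, so that the alternating sum becomes the sum of the rising factorials of `n, …, 1`,
which telescopes. -/

open Finset

theorem rStirling1_self (r k : ℕ) : rStirling1 r r k = if k = r then 1 else 0 := by
  cases r with
  | zero => simp [rStirling1]
  | succ r => grind [rStirling1]

section rStirling1

variable {r n : ℕ}

theorem rStirling1_eq_zero_of_right_lt {k : ℕ} (h : k < r) : rStirling1 r n k = 0 := by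
  cases n with
  | zero => rw [rStirling1, if_neg (by omega)]
  | succ n => rw [rStirling1, if_pos (Or.inr h)]

theorem rStirling1_succ_succ (h : r ≤ n) (k : ℕ) :
    rStirling1 r (n + 1) (k + 1) = n * rStirling1 r n (k + 1) + rStirling1 r n k := by
  rcases lt_or_ge (k + 1) r with hk | hk
  · simp only [rStirling1_eq_zero_of_right_lt hk,
      rStirling1_eq_zero_of_right_lt (k.lt_succ_self.trans hk), mul_zero, add_zero]
  · rw [rStirling1, if_neg (by omega), if_neg (by omega), if_neg k.succ_ne_zero,
      Nat.add_sub_cancel]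

theorem rStirling1_succ_self_right (h : r ≤ n) :
    rStirling1 r (n + 1) r = n * rStirling1 r n r := by
  cases r with
  | zero => cases n <;> simp [rStirling1]
  | succ r =>
    rw [rStirling1_succ_succ h, rStirling1_eq_zero_of_right_lt r.lt_succ_self, add_zero]

theorem rStirling1_eq_zero_of_lt {k : ℕ} (hr : r ≤ n) (h : n < k) : rStirling1 r n k = 0 := by
  induction n, hr using Nat.le_induction generalizing k with
  | base => rw [rStirling1_self, if_neg h.ne']
  | succ n hn ih =>
    obtain ⟨k, rfl⟩ := Nat.exists_eq_add_one_of_ne_zero (Nat.ne_zero_of_lt h)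
    rw [rStirling1_succ_succ hn, ih (by omega), ih (by omega), mul_zero]

end rStirling1

theorem sum_rStirling1_mul_pow {R : Type*} [CommSemiring R] (r m : ℕ) (x : R) :
    ∑ i ∈ range (m + 1), (rStirling1 r (m + r) (i + r) : R) * x ^ i =
      (ascPochhammer R m).eval (x + r) := by
  induction m with
  | zero => simp [rStirling1_self]
  | succ m ih =>
    have hr : r ≤ m + r := Nat.le_add_left r m
    set c : ℕ → R := fun i ↦ rStirling1 r (m + r) (i + r)
    have c_top : c (m + 1) = 0 := by
      simp only [c, rStirling1_eq_zero_of_lt hr (show m + r < m + 1 + r by omega), Nat.cast_zero]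
    have rec_zero : (rStirling1 r (m + 1 + r) (0 + r) : R) = (m + r) * c 0 := by
      simp only [c, Nat.add_right_comm m 1 r, zero_add, rStirling1_succ_self_right hr]
      push_cast
      rfl
    have rec_succ (i : ℕ) :
        (rStirling1 r (m + 1 + r) (i + 1 + r) : R) = (m + r) * c (i + 1) + c i := by
      simp only [c, Nat.add_right_comm _ 1 r, rStirling1_succ_succ hr]
      push_cast
      rfl
    calc ∑ i ∈ range (m + 1 + 1), (rStirling1 r (m + 1 + r) (i + r) : R) * x ^ i
        = ∑ i ∈ range (m + 1), ((m + r) * (c (i + 1) * x ^ (i + 1)) + c i * x ^ i * x) +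
            (m + r) * (c 0 * x ^ 0) := by
          rw [sum_range_succ', rec_zero, mul_assoc]
          congr 1
          refine sum_congr rfl fun i _ ↦ ?_
          rw [rec_succ]
          ring
      _ = (m + r) * ∑ i ∈ range (m + 1 + 1), c i * x ^ i +
            (∑ i ∈ range (m + 1), c i * x ^ i) * x := by
          rw [sum_add_distrib, ← mul_sum, ← sum_mul, sum_range_succ' _ (m + 1)]
          ring
      _ = (∑ i ∈ range (m + 1), c i * x ^ i) * (x + r + m) := by
          rw [sum_range_succ _ (m + 1), c_top]
          ring
      _ = (ascPochhammer R (m + 1)).eval (x + r) := by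
          rw [ih, ascPochhammer_succ_eval]

theorem sum_neg_one_pow_mul_rStirling1_mul_powerSum {R : Type*} [CommRing R] (r m n : ℕ) :
    ∑ i ∈ range (m + 1), (-1 : R) ^ i * rStirling1 r (m + r) (i + r) * powerSum i n =
      ∑ k ∈ Icc 1 n, (ascPochhammer R m).eval (r - k : R) := by
  simp only [powerSum, Nat.cast_sum, Nat.cast_pow, mul_sum]
  rw [sum_comm]
  refine sum_congr rfl fun k _ ↦ ?_
  rw [sub_eq_neg_add, ← sum_rStirling1_mul_pow]
  refine sum_congr rfl fun i _ ↦ ?_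
  rw [neg_pow (k : R)]
  ring

theorem sum_Icc_one_reflect {M : Type*} [AddCommMonoid M] (f : ℕ → M) (n : ℕ) :
    ∑ k ∈ Icc 1 n, f (n + 1 - k) = ∑ k ∈ Icc 1 n, f k := by
  simpa [Ico_add_one_right_eq_Icc] using sum_Ico_reflect f 1 (Nat.le_succ (n + 1))

theorem sum_Icc_one_ascFactorial (m n : ℕ) :
    ∑ k ∈ Icc 1 n, k.ascFactorial m = m.factorial * (n + m).choose (m + 1) := by
  induction n with
  | zero => simp
  | succ n ih =>
    rw [sum_Icc_succ_top (Nat.le_add_left 1 n), ih, Nat.ascFactorial_eq_factorial_mul_choose,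
      Nat.add_right_comm, Nat.choose_succ_succ, mul_add, add_comm]

theorem stmt2 (m n : ℕ) :
    ∑ i ∈ Finset.range (m + 1),
        (-1 : ℤ) ^ i * rStirling1 (n + 1) (m + n + 1) (i + n + 1) * powerSum i n =
      m.factorial * (n + m).choose (m + 1) := by
  calc ∑ i ∈ range (m + 1),
        (-1 : ℤ) ^ i * rStirling1 (n + 1) (m + n + 1) (i + n + 1) * powerSum i n
      = ∑ k ∈ Icc 1 n, (ascPochhammer ℤ m).eval ((n + 1 : ℕ) - k : ℤ) :=
        sum_neg_one_pow_mul_rStirling1_mul_powerSum (n + 1) m n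
    _ = ∑ k ∈ Icc 1 n, ((n + 1 - k).ascFactorial m : ℤ) := by
        refine sum_congr rfl fun k hk ↦ ?_
        have hkn : k ≤ n + 1 := (mem_Icc.mp hk).2.trans n.le_succ
        rw [Nat.cast_ascFactorial, Nat.cast_sub hkn]
    _ = ∑ k ∈ Icc 1 n, (k.ascFactorial m : ℤ) :=
        sum_Icc_one_reflect (fun k ↦ (k.ascFactorial m : ℤ)) n
    _ = m.factorial * (n + m).choose (m + 1) := by
        exact_mod_cast sum_Icc_one_ascFactorial m n
end

section
/- For all integers j ≥ 0 and n ≥ 0, the hyperharmonic number of order n satisfies H_{j+1}^{(n)} = (1/(j+1)!) · Σ_{i=0}^{j} (i+1) · ⟦j+1, i+1⟧ · n^i. -/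
/-- Hyperharmonic numbers: `hyperharmonic r n = H_n^{(r)}`. -/
def hyperharmonic : ℕ → ℕ → ℚ
  | 0, n => if n = 0 then 0 else 1 / (n : ℚ)
  | (r+1), n => ∑ i ∈ Finset.Icc 1 n, hyperharmonic r i

/-!
Both sides are values of the derivative of the rising factorial
`x⁽ᵐ⁾ = x (x + 1) ⋯ (x + m - 1)` at `x = n`, divided by `m!`, where `m = j + 1`.
On the right this is the expansion `x⁽ᵐ⁾ = ∑ₖ ⟦m,k⟧ xᵏ`, differentiated term by term. On the left,
differentiating `(x + 1)⁽ᵐ⁺¹⁾ = x⁽ᵐ⁺¹⁾ + (m + 1) (x + 1)⁽ᵐ⁾` and dividing by `(m + 1)!` gives the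
Pascal-type recurrence of the hyperharmonic numbers, and the derivative of `x⁽ᵐ⁺¹⁾` at `0` is `m!`,
which gives `H_{m+1}^{(0)} = 1 / (m + 1)`.
-/

open Polynomial

theorem coeff_ascPochhammer (S : Type*) [Semiring S] (n k : ℕ) :
    (ascPochhammer S n).coeff k = Nat.stirlingFirst n k := by
  induction n generalizing k with
  | zero => cases k <;> simp [coeff_one]
  | succ n ih =>
    rw [ascPochhammer_succ_right, mul_add, coeff_add, coeff_mul_natCast, ih]
    cases k with
    | zero => cases n <;> simp
    | succ k =>
      rw [coeff_mul_X, ih, Nat.stirlingFirst_succ_succ, add_comm, ← Nat.cast_mul, mul_comm,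
        Nat.cast_add]

theorem coeff_derivative_ascPochhammer (S : Type*) [Semiring S] (n k : ℕ) :
    (derivative (ascPochhammer S n)).coeff k = (k + 1) * Nat.stirlingFirst n (k + 1) := by
  rw [coeff_derivative, coeff_ascPochhammer, Nat.cast_comm]

theorem natDegree_derivative_ascPochhammer_succ_le (S : Type*) [Semiring S] (n : ℕ) :
    (derivative (ascPochhammer S (n + 1))).natDegree ≤ n :=
  natDegree_le_iff_coeff_eq_zero.2 fun k hk => by
    rw [coeff_derivative_ascPochhammer, Nat.stirlingFirst_eq_zero_of_lt (by omega),
      Nat.cast_zero, mul_zero]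

theorem eval_derivative_ascPochhammer_succ {S : Type*} [Semiring S] (n : ℕ) (x : S) :
    (derivative (ascPochhammer S (n + 1))).eval x =
      ∑ i ∈ Finset.range (n + 1), (i + 1) * Nat.stirlingFirst (n + 1) (i + 1) * x ^ i := by
  rw [eval_eq_sum_range' (Nat.lt_succ_of_le (natDegree_derivative_ascPochhammer_succ_le S n))]
  simp only [coeff_derivative_ascPochhammer]

theorem eval_zero_derivative_ascPochhammer_succ (S : Type*) [Semiring S] (n : ℕ) :
    (derivative (ascPochhammer S (n + 1))).eval 0 = n.factorial := by
  rw [← coeff_zero_eq_eval_zero, coeff_derivative_ascPochhammer, zero_add,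
    Nat.stirlingFirst_one_right, Nat.cast_zero, zero_add, one_mul]

theorem eval_add_one_derivative_ascPochhammer_succ {S : Type*} [CommSemiring S] (n : ℕ) (x : S) :
    (derivative (ascPochhammer S (n + 1))).eval (x + 1) =
      (derivative (ascPochhammer S (n + 1))).eval x +
        (n + 1) * (derivative (ascPochhammer S n)).eval (x + 1) := by
  have h := congrArg (fun p => (derivative p).eval x) (ascPochhammer_succ_comp_X_add_one S n)
  simpa [derivative_comp, eval_comp] using h

theorem stirling1_eq_stirlingFirst (n k : ℕ) : stirling1 n k = Nat.stirlingFirst n k := by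
  unfold stirling1
  induction n generalizing k with
  | zero => cases k <;> simp [rStirling1]
  | succ n ih => cases k <;> simp [rStirling1, Nat.stirlingFirst_succ_succ, ih]

theorem hyperharmonic_zero_right (r : ℕ) : hyperharmonic r 0 = 0 := by
  cases r <;> simp [hyperharmonic]

theorem hyperharmonic_succ_succ (r n : ℕ) :
    hyperharmonic (r + 1) (n + 1) = hyperharmonic (r + 1) n + hyperharmonic r (n + 1) := by
  simp only [hyperharmonic]
  exact Finset.sum_Icc_succ_top (Nat.le_add_left 1 n) _

theorem hyperharmonic_eq_eval_derivative_ascPochhammer (r n : ℕ) :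
    hyperharmonic r n = (derivative (ascPochhammer ℚ n)).eval (r : ℚ) / n.factorial := by
  induction n generalizing r with
  | zero => simp [hyperharmonic_zero_right]
  | succ n ihn =>
    have hn : (n.factorial : ℚ) ≠ 0 := mod_cast n.factorial_ne_zero
    induction r with
    | zero =>
      rw [Nat.cast_zero, eval_zero_derivative_ascPochhammer_succ, Nat.factorial_succ]
      simp only [hyperharmonic, n.succ_ne_zero, if_false]
      push_cast
      field_simp
    | succ r ihr =>
      rw [hyperharmonic_succ_succ, ihn, ihr, Nat.factorial_succ]
      push_cast
      rw [eval_add_one_derivative_ascPochhammer_succ]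
      field_simp
      ring

theorem stmt5 (j n : ℕ) :
    hyperharmonic n (j + 1) =
      (1 / (j + 1).factorial) * ∑ i ∈ Finset.range (j + 1),
        (i + 1) * stirling1 (j + 1) (i + 1) * (n : ℚ) ^ i := by
  simp only [stirling1_eq_stirlingFirst]
  rw [hyperharmonic_eq_eval_derivative_ascPochhammer, eval_derivative_ascPochhammer_succ,
    one_div_mul_eq_div]
end
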